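/- There exists a constant Λ > 0 such that for every t ∈ [0,1] and every x ∈ (0,1) one has x·(1−x)·G_t''(x) > Λ, and also x·(1−x)·G_P''(x) > Λ. -/

import Mathlib

/-!
On `(0, 1)` we have `GP'' = 1 / (x * (1 - x))`, so the weighted second derivative of `GP + f` is
`1 + x * (1 - x) * f''`. If `f` is `C²` on `[0, 1]`, this extends continuously to `[0, 1]` with
value `1` at both endpoints, so positivity on `(0, 1)` gives positivity on the compact interval and
hence a positive lower bound. The bound passes from `t = 0` and `t = 1` to all `t ∈ [0, 1]` because
the second derivative is affine in `t`.
-/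

open Set Filter

noncomputable def GP : ℝ → ℝ := fun x => x * Real.log x + (1 - x) * Real.log (1 - x)

noncomputable def Gt (f0 f1 : ℝ → ℝ) (t : ℝ) : ℝ → ℝ :=
  fun x => GP x + ((1 - t) * f0 x + t * f1 x)

noncomputable def Phase (G : ℝ → ℝ) (α : ℝ) : ℝ → ℝ :=
  fun x => (x - α) * deriv G x - (G x - G α)

noncomputable def Qnorm (G : ℝ → ℝ) (N : ℕ) (α : ℝ) : ℝ :=
  2 * Real.pi * ∫ x in (0:ℝ)..1, Real.exp (-(N : ℝ) * Phase G α x)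

noncomputable def RPhase (G : ℝ → ℝ) (α : ℝ) : ℝ → ℝ :=
  fun y => (1 / α) * Phase G α (α * (1 + y))

noncomputable def Leg (G : ℝ → ℝ) (S : Set ℝ) : ℝ → ℝ :=
  fun ρ => sSup ((fun x => x * ρ - G x) '' S)

noncomputable def QQ (G : ℝ → ℝ) (N : ℕ) (α : ℝ) : ℝ :=
  Qnorm G N α * Real.exp ((N : ℝ) * G α)

lemma GP_eq_neg_binEntropy : GP = -Real.binEntropy := by
  funext x
  simp only [GP, Pi.neg_apply, Real.binEntropy, Real.log_inv]
  ring

lemma contDiffAt_GP {x : ℝ} {n : WithTop ℕ∞} (hx₀ : x ≠ 0) (hx₁ : x ≠ 1) :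
    ContDiffAt ℝ n GP x := by
  have hlog_one_sub : ContDiffAt ℝ n (fun y => Real.log (1 - y)) x :=
    (contDiffAt_const.sub contDiffAt_id).log (sub_ne_zero.2 hx₁.symm)
  exact (contDiffAt_id.mul (contDiffAt_id.log hx₀)).add
    ((contDiffAt_const.sub contDiffAt_id).mul hlog_one_sub)

lemma iteratedDeriv_two_GP (x : ℝ) : iteratedDeriv 2 GP x = 1 / (x * (1 - x)) := by
  rw [GP_eq_neg_binEntropy, iteratedDeriv_neg, iteratedDeriv_eq_iterate, Real.deriv2_binEntropy,
    neg_div, neg_neg]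

lemma mul_iteratedDeriv_two_GP {x : ℝ} (hx₀ : x ≠ 0) (hx₁ : x ≠ 1) :
    x * (1 - x) * iteratedDeriv 2 GP x = 1 := by
  rw [iteratedDeriv_two_GP, mul_one_div_cancel (mul_ne_zero hx₀ (sub_ne_zero.2 hx₁.symm))]

lemma mul_iteratedDeriv_two_GP_add {f : ℝ → ℝ} {x : ℝ} (hf : ContDiffAt ℝ 2 f x)
    (hx₀ : x ≠ 0) (hx₁ : x ≠ 1) :
    x * (1 - x) * iteratedDeriv 2 (GP + f) x = 1 + x * (1 - x) * iteratedDeriv 2 f x := by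
  rw [iteratedDeriv_add (contDiffAt_GP hx₀ hx₁) hf, mul_add, mul_iteratedDeriv_two_GP hx₀ hx₁]

lemma exists_pos_forall_lt_mul_iteratedDeriv_two_GP_add {f : ℝ → ℝ}
    (hf : ContDiffOn ℝ 2 f (Icc 0 1))
    (hpos : ∀ x ∈ Ioo (0 : ℝ) 1, 0 < iteratedDeriv 2 (GP + f) x) :
    ∃ Λ : ℝ, 0 < Λ ∧ ∀ x ∈ Ioo (0 : ℝ) 1, Λ < x * (1 - x) * iteratedDeriv 2 (GP + f) x := by
  let h : ℝ → ℝ := fun x => 1 + x * (1 - x) * iteratedDerivWithin 2 f (Icc 0 1) x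
  have hunique : UniqueDiffOn ℝ (Icc (0 : ℝ) 1) := uniqueDiffOn_Icc zero_lt_one
  have h_eq : ∀ x ∈ Ioo (0 : ℝ) 1, x * (1 - x) * iteratedDeriv 2 (GP + f) x = h x := by
    intro x hx
    have hfx : ContDiffAt ℝ 2 f x := hf.contDiffAt (Icc_mem_nhds hx.1 hx.2)
    rw [mul_iteratedDeriv_two_GP_add hfx hx.1.ne' hx.2.ne,
      ← iteratedDerivWithin_eq_iteratedDeriv hunique hfx (Ioo_subset_Icc_self hx)]
  have h_cont : ContinuousOn h (Icc 0 1) := by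
    have := hf.continuousOn_iteratedDerivWithin (m := 2) le_rfl hunique
    fun_prop
  have h_pos : ∀ x ∈ Icc (0 : ℝ) 1, 0 < h x := by
    intro x hx
    rcases eq_endpoints_or_mem_Ioo_of_mem_Icc hx with rfl | rfl | hx
    · simp [h]
    · simp [h]
    · rw [← h_eq x hx]
      exact mul_pos (mul_pos hx.1 (sub_pos.2 hx.2)) (hpos x hx)
  obtain ⟨m, hm, hle⟩ := isCompact_Icc.exists_forall_le' h_cont h_pos
  obtain ⟨Λ, hΛ, hΛm⟩ := exists_between hm
  exact ⟨Λ, hΛ, fun x hx => h_eq x hx ▸ hΛm.trans_le (hle x (Ioo_subset_Icc_self hx))⟩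

section Gt

variable (f0 f1 : ℝ → ℝ)

lemma Gt_zero : Gt f0 f1 0 = GP + f0 := by
  funext x
  simp [Gt]

lemma Gt_one : Gt f0 f1 1 = GP + f1 := by
  funext x
  simp [Gt]

lemma Gt_eq_affine_combination (t : ℝ) :
    Gt f0 f1 t = (1 - t) • Gt f0 f1 0 + t • Gt f0 f1 1 := by
  funext x
  simp only [Gt, Pi.add_apply, Pi.smul_apply, smul_eq_mul]
  ring

variable {f0 f1}

lemma iteratedDeriv_Gt {n : ℕ} {x : ℝ} (hf0 : ContDiffAt ℝ n f0 x) (hf1 : ContDiffAt ℝ n f1 x)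
    (hx₀ : x ≠ 0) (hx₁ : x ≠ 1) (t : ℝ) :
    iteratedDeriv n (Gt f0 f1 t) x =
      (1 - t) * iteratedDeriv n (Gt f0 f1 0) x + t * iteratedDeriv n (Gt f0 f1 1) x := by
  have hG0 : ContDiffAt ℝ n (Gt f0 f1 0) x := Gt_zero f0 f1 ▸ (contDiffAt_GP hx₀ hx₁).add hf0
  have hG1 : ContDiffAt ℝ n (Gt f0 f1 1) x := Gt_one f0 f1 ▸ (contDiffAt_GP hx₀ hx₁).add hf1
  have hsmul0 : ContDiffAt ℝ n ((1 - t) • Gt f0 f1 0) x := hG0.const_smul (1 - t)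
  have hsmul1 : ContDiffAt ℝ n (t • Gt f0 f1 1) x := hG1.const_smul t
  rw [Gt_eq_affine_combination, iteratedDeriv_add hsmul0 hsmul1,
    iteratedDeriv_const_smul_field, iteratedDeriv_const_smul_field, smul_eq_mul, smul_eq_mul]

end Gt

theorem bergman_cp1_lemma_bound1_general {f0 f1 : ℝ → ℝ}
    (hf0 : ContDiffOn ℝ 2 f0 (Icc 0 1)) (hf1 : ContDiffOn ℝ 2 f1 (Icc 0 1))
    (hG0 : ∀ x ∈ Ioo (0 : ℝ) 1, 0 < iteratedDeriv 2 (Gt f0 f1 0) x)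
    (hG1 : ∀ x ∈ Ioo (0 : ℝ) 1, 0 < iteratedDeriv 2 (Gt f0 f1 1) x) :
    ∃ Λ : ℝ, 0 < Λ ∧ ∀ t ∈ Icc (0 : ℝ) 1, ∀ x ∈ Ioo (0 : ℝ) 1,
      Λ < x * (1 - x) * iteratedDeriv 2 (Gt f0 f1 t) x ∧
      Λ < x * (1 - x) * iteratedDeriv 2 GP x := by
  obtain ⟨Λ₀, hΛ₀, hlt₀⟩ :=
    exists_pos_forall_lt_mul_iteratedDeriv_two_GP_add hf0 (Gt_zero f0 f1 ▸ hG0)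
  obtain ⟨Λ₁, hΛ₁, hlt₁⟩ :=
    exists_pos_forall_lt_mul_iteratedDeriv_two_GP_add hf1 (Gt_one f0 f1 ▸ hG1)
  rw [← Gt_zero f0 f1] at hlt₀
  rw [← Gt_one f0 f1] at hlt₁
  obtain ⟨Λ, hΛ, hΛ_lt⟩ := exists_between (lt_min one_pos (lt_min hΛ₀ hΛ₁))
  obtain ⟨hΛ_one, hΛ_lt₀, hΛ_lt₁⟩ : Λ < 1 ∧ Λ < Λ₀ ∧ Λ < Λ₁ := by
    simpa only [lt_min_iff] using hΛ_lt
  refine ⟨Λ, hΛ, fun t ht x hx => ⟨?_, ?_⟩⟩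
  · have hIcc : Icc (0 : ℝ) 1 ∈ nhds x := Icc_mem_nhds hx.1 hx.2
    have hconvex_combination : x * (1 - x) * iteratedDeriv 2 (Gt f0 f1 t) x =
        (1 - t) • (x * (1 - x) * iteratedDeriv 2 (Gt f0 f1 0) x) +
          t • (x * (1 - x) * iteratedDeriv 2 (Gt f0 f1 1) x) := by
      rw [iteratedDeriv_Gt (hf0.contDiffAt hIcc) (hf1.contDiffAt hIcc) hx.1.ne' hx.2.ne]
      simp only [smul_eq_mul]
      ring
    rw [hconvex_combination]
    exact convex_Ioi Λ (hΛ_lt₀.trans (hlt₀ x hx)) (hΛ_lt₁.trans (hlt₁ x hx))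
      (sub_nonneg.2 ht.2) ht.1 (sub_add_cancel 1 t)
  · rwa [mul_iteratedDeriv_two_GP hx.1.ne' hx.2.ne]

theorem bergman_cp1_lemma_bound1
    (f0 f1 : ℝ → ℝ) (hf0 : ContDiff ℝ (⊤ : ℕ∞) f0) (hf1 : ContDiff ℝ (⊤ : ℕ∞) f1)
    (hG0 : ∀ x ∈ Set.Ioo (0:ℝ) 1, 0 < iteratedDeriv 2 (Gt f0 f1 0) x)
    (hG1 : ∀ x ∈ Set.Ioo (0:ℝ) 1, 0 < iteratedDeriv 2 (Gt f0 f1 1) x) :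
    ∃ Λ : ℝ, 0 < Λ ∧ ∀ t ∈ Set.Icc (0:ℝ) 1, ∀ x ∈ Set.Ioo (0:ℝ) 1,
      Λ < x * (1 - x) * iteratedDeriv 2 (Gt f0 f1 t) x ∧
      Λ < x * (1 - x) * iteratedDeriv 2 GP x :=
  bergman_cp1_lemma_bound1_general (contDiff_infty.1 hf0 2).contDiffOn
    (contDiff_infty.1 hf1 2).contDiffOn hG0 hG1
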